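/- For every integer h ≥ 3 there exist ε₀ = ε₀(h) > 0 and c = c(h) > 0 such that the following holds for every ε ∈ (0, ε₀) and every non-bipartite graph H on h vertices: letting K be the core of H and k = |V(K)|, there is n₀ = n₀(ε) such that for every n ≥ n₀ there exists a graph G on n vertices satisfying: (1) there is a homomorphism from G to K; (2) G is ε-far from being induced H-free; (3) G contains at most ε^{c·log(1/ε)}·n^k (not necessarily induced) copies of K. -/

import Mathlib

open scoped Classical
open Finset

noncomputable section

/-- Number of unordered vertex pairs on which two graphs on the same vertex set differ. -/
def editDist {n : ℕ} (G H : SimpleGraph (Fin n)) : ℕ :=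
  Set.ncard {e : Sym2 (Fin n) | (e ∈ G.edgeSet ∧ e ∉ H.edgeSet) ∨ (e ∉ G.edgeSet ∧ e ∈ H.edgeSet)}

/-- `G` is `ε`-far from satisfying the graph property `P`. -/
def Far (P : ∀ n : ℕ, Set (SimpleGraph (Fin n))) {n : ℕ} (G : SimpleGraph (Fin n)) (ε : ℝ) : Prop :=
  ∀ H : SimpleGraph (Fin n), H ∈ P n → ε * (n : ℝ) ^ 2 ≤ (editDist G H : ℝ)

/-- The subgraph induced by a vertex subset `Q` of size `m`, as a graph on `Fin m`. -/
def inducedOn {n : ℕ} (G : SimpleGraph (Fin n)) {m : ℕ} (Q : Finset (Fin n))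
    (h : Q.card = m) : SimpleGraph (Fin m) :=
  G.comap fun i => ((Q.orderIsoOfFin h) i : Fin n)

/-- A graph property is easily testable if for some constant `c > 0`, for every `ε ∈ (0,1/2)`
and every graph on at least `ε ^ (-c)` vertices which is `ε`-far from `P`, at least a
`2/3`-fraction of the `⌈ε ^ (-c)⌉`-element vertex subsets induce a subgraph not satisfying `P`. -/
def EasilyTestable (P : ∀ n : ℕ, Set (SimpleGraph (Fin n))) : Prop :=
  ∃ c : ℝ, 0 < c ∧ ∀ ε : ℝ, 0 < ε → ε < 1 / 2 → ∀ n : ℕ, ∀ G : SimpleGraph (Fin n),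
    ε ^ (-c) ≤ (n : ℝ) → Far P G ε →
    (2 / 3 : ℝ) * (((Finset.univ : Finset (Fin n)).powersetCard ⌈ε ^ (-c)⌉₊).card : ℝ) ≤
      ((((Finset.univ : Finset (Fin n)).powersetCard ⌈ε ^ (-c)⌉₊).filter
        fun Q => ∃ h : Q.card = ⌈ε ^ (-c)⌉₊, inducedOn G Q h ∉ P ⌈ε ^ (-c)⌉₊).card : ℝ)

/-- The property of being induced `𝓕`-free. -/
def InducedFree (𝓕 : Set (Σ k : ℕ, SimpleGraph (Fin k))) : ∀ n : ℕ, Set (SimpleGraph (Fin n)) :=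
  fun n => {G | ∀ p ∈ 𝓕, IsEmpty (p.2 ↪g G)}

/-- A graph is bipartite: its vertex set can be partitioned into two independent sets. -/
def IsBipGraph {V : Type*} (H : SimpleGraph V) : Prop :=
  ∃ A : Set V, (∀ u ∈ A, ∀ v ∈ A, ¬ H.Adj u v) ∧ (∀ u ∉ A, ∀ v ∉ A, ¬ H.Adj u v)

/-- A graph is co-bipartite: its vertex set can be partitioned into two cliques. -/
def IsCoBipGraph {V : Type*} (H : SimpleGraph V) : Prop :=
  ∃ A : Set V, (∀ u ∈ A, ∀ v ∈ A, u ≠ v → H.Adj u v) ∧ (∀ u ∉ A, ∀ v ∉ A, u ≠ v → H.Adj u v)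

/-- A graph is split: its vertex set can be partitioned into a clique and an independent set. -/
def IsSplitGraph {V : Type*} (H : SimpleGraph V) : Prop :=
  ∃ A : Set V, (∀ u ∈ A, ∀ v ∈ A, u ≠ v → H.Adj u v) ∧ (∀ u ∉ A, ∀ v ∉ A, ¬ H.Adj u v)

/-- `X` induces a core of `G`: there is a homomorphism from `G` to the induced subgraph
`G[X]`, and `X` has minimum cardinality among all vertex sets with this property. -/
def IsCoreOf {V : Type*} (G : SimpleGraph V) (X : Set V) : Prop :=
  Nonempty (G →g G.induce X) ∧
  ∀ Y : Set V, Nonempty (G →g G.induce Y) → X.ncard ≤ Y.ncard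

/-!
Let `K` be the core of `H`. Take a dense set `S` of integers in which no element is a nontrivial
mean of boundedly many others (Behrend) and an injective labelling `a` of the vertices of `H`, put a
copy of `H` on the points `x + a u * s` of each progression with difference `s ∈ S`, one part for
each vertex `u` of `H`, and blow up. Two points determine a progression, so this yields many induced
copies of `H` any two of which share at most one vertex, and each of them has to be destroyed by an
edit of its own.

Every endomorphism of `K` is an automorphism, so a copy of `K` in the blow-up is a section of the
projection to `K`. As `K` is not bipartite it contains a cycle, and `a` can be chosen to increase
along the lift of this cycle under any section. The difference used by the closing edge is then a
weighted mean of the differences used by the other edges, so all of them agree, and the position of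
the last vertex is determined by those of the first two. This saves the factor
`ε ^ (c * log (1 / ε))`.
-/

/-- `S` is *mean-free of order `A`*: no element of `S` is the mean of at most `A` elements of `S`,
counted with multiplicity, unless these are all equal to it. In a cancellative monoid the case
`A = 2` is Mathlib's `ThreeAPFree`. -/
def MeanFree {M : Type*} [AddCommMonoid M] (A : ℕ) (S : Set M) : Prop :=
  ∀ ⦃T : Multiset M⦄, (∀ y ∈ T, y ∈ S) → T.card ≤ A → ∀ ⦃x⦄, x ∈ S → T.sum = T.card • x →
    ∀ y ∈ T, y = x

namespace MeanFree

variable {M N : Type*} {A : ℕ}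

lemma of_isAddFreimanHom [AddCommMonoid M] [AddCancelCommMonoid N] {S : Set M} {S' : Set N}
    {f : M → N} (hf : IsAddFreimanHom A S S' f) (hinj : Set.InjOn f S) (hS' : MeanFree A S') :
    MeanFree A S := by
  intro T hT hcard x hx hsum y hy
  have hmap : (T.map f).sum = (T.map f).card • f x := by
    have := (hf.mono hcard).map_sum_eq_map_sum (s := T) (t := Multiset.replicate T.card x) hT
      (fun z hz => Multiset.eq_of_mem_replicate hz ▸ hx) rfl (Multiset.card_replicate _ _)
      (by simpa using hsum)
    simpa using this
  refine hinj (hT y hy) hx (hS' ?_ (by simpa using hcard) (hf.mapsTo hx) hmap _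
    (Multiset.mem_map_of_mem f hy))
  simp only [Multiset.mem_map, forall_exists_index, and_imp, forall_apply_eq_imp_iff₂]
  exact fun z hz => hf.mapsTo (hT z hz)

lemma image_isAddFreimanIso [AddCancelCommMonoid M] [AddCommMonoid N] {S : Set M} {S' : Set N}
    {f : M → N} (hf : IsAddFreimanIso A S S' f) (hS : MeanFree A S) : MeanFree A S' :=
  of_isAddFreimanHom hf.invFunOn.isAddFreimanHom hf.invFunOn.bijOn.injOn hS

lemma eq_of_sum_nsmul_eq [AddCommMonoid M] {S : Set M} {ι : Type*} (hS : MeanFree A S)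
    {I : Finset ι} {w : ι → ℕ} {s : ι → M}
    (hs : ∀ i ∈ I, s i ∈ S) (hw : ∑ i ∈ I, w i ≤ A) {x : M} (hx : x ∈ S)
    (hsum : ∑ i ∈ I, w i • s i = (∑ i ∈ I, w i) • x) {i : ι} (hi : i ∈ I) (hwi : w i ≠ 0) :
    s i = x := by
  refine hS (T := ∑ i ∈ I, Multiset.replicate (w i) (s i)) ?_ (by simpa using hw) hx
    (by simpa [Multiset.sum_sum] using hsum) _
    (Multiset.mem_sum.2 ⟨i, hi, Multiset.mem_replicate.2 ⟨hwi, rfl⟩⟩)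
  intro y hy
  obtain ⟨j, hj, hy⟩ := Multiset.mem_sum.1 hy
  exact Multiset.eq_of_mem_replicate hy ▸ hs j hj

end MeanFree

lemma meanFree_sphere {E : Type*} [NormedAddCommGroup E] [NormedSpace ℝ E] [StrictConvexSpace ℝ E]
    (A : ℕ) (r : ℝ) : MeanFree A (Metric.sphere (0 : E) r) := by
  intro T hT _ x hx hsum y hy
  have hcard : (T.card : ℝ) ≠ 0 := by
    exact_mod_cast (Multiset.card_pos_iff_exists_mem.2 ⟨y, hy⟩).ne'
  have hmean : ∑ z ∈ T.toFinset, ((T.count z : ℝ) / T.card) • z = x := by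
    simp only [div_eq_inv_mul, mul_smul, Nat.cast_smul_eq_nsmul, ← Finset.smul_sum,
      ← Finset.sum_multiset_count, hsum]
    rw [← Nat.cast_smul_eq_nsmul ℝ, inv_smul_smul₀ hcard]
  have hconst : ∀ z ∈ T, z = y := by
    by_contra! ⟨z, hz, hzy⟩
    refine absurd (mem_sphere_zero_iff_norm.1 hx) (ne_of_lt (hmean ▸ ?_))
    refine norm_sum_lt_of_strictConvexSpace (z := id) (fun _ _ => by positivity) ?_
      (Multiset.mem_toFinset.2 hz) (Multiset.mem_toFinset.2 hy) hzy
      (div_ne_zero (by simpa using hz) hcard) (div_ne_zero (by simpa using hy) hcard)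
      fun v hv => (mem_sphere_zero_iff_norm.1 (hT v (Multiset.mem_toFinset.1 hv))).le
    rw [← Finset.sum_div, ← Nat.cast_sum, Multiset.toFinset_sum_count_eq, div_self hcard]
  rw [Multiset.eq_replicate_of_mem hconst, Multiset.sum_replicate, Multiset.card_replicate,
    ← Nat.cast_smul_eq_nsmul ℝ, ← Nat.cast_smul_eq_nsmul ℝ] at hsum
  exact smul_right_injective E hcard hsum

lemma meanFree_behrendSphere (A D d k : ℕ) :
    MeanFree A (Behrend.sphere D d k : Set (Fin D → ℕ)) := by
  let f : (Fin D → ℕ) →+ EuclideanSpace ℝ (Fin D) :=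
    { toFun x := WithLp.toLp 2 ((↑) ∘ x)
      map_zero' := PiLp.ext fun _ => Nat.cast_zero
      map_add' _ _ := PiLp.ext fun _ => Nat.cast_add _ _ }
  exact (meanFree_sphere A (√k)).of_isAddFreimanHom
    (AddHomClass.isAddFreimanHom f Behrend.sphere_subset_preimage_metric_sphere)
    ((WithLp.toLp_injective 2).comp Nat.cast_injective.comp_left).injOn

lemma isAddFreimanIso_behrendMap {A : ℕ} (hA : A ≠ 0) (D d : ℕ) :
    IsAddFreimanIso A (Behrend.box D d : Set (Fin D → ℕ))
      (Behrend.map (A * d) '' (Behrend.box D d : Set (Fin D → ℕ))) (Behrend.map (A * d)) := by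
  have hsum_lt : ∀ ⦃T : Multiset (Fin D → ℕ)⦄, (∀ ⦃x⦄, x ∈ T → x ∈ (Behrend.box D d : Set _)) →
      T.card = A → ∀ i, T.sum i < A * d := by
    intro T hT hcard i
    obtain ⟨x, hx⟩ := Multiset.card_pos_iff_exists_mem.1 (by omega : 0 < T.card)
    have hd : 0 < d := Nat.zero_lt_of_lt (Behrend.mem_box.1 (hT hx) i)
    calc T.sum i = (T.map fun y => y i).sum := Pi.multiset_sum_apply i T
      _ ≤ (T.map fun y => y i).card • (d - 1) := Multiset.sum_le_card_nsmul _ _ <| by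
          simp only [Multiset.mem_map, forall_exists_index, and_imp, forall_apply_eq_imp_iff₂]
          exact fun y hy => Nat.le_sub_one_of_lt (Behrend.mem_box.1 (hT hy) i)
      _ < A * d := by
          rw [Multiset.card_map, hcard, smul_eq_mul]
          exact Nat.mul_lt_mul_of_pos_left (by omega) (by omega)
  refine ⟨(Behrend.map_injOn.mono fun x hx i => ?_).bijOn_image, fun s t hs ht hcs hct => ?_⟩
  · exact (Behrend.mem_box.1 hx i).trans_le (Nat.le_mul_of_pos_left d (by omega))
  · rw [← map_multiset_sum, ← map_multiset_sum]
    exact Behrend.map_injOn.eq_iff (hsum_lt hs hcs) (hsum_lt ht hct)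

lemma behrendMap_lt_pow {B D : ℕ} {x : Fin D → ℕ} (hx : ∀ i, x i < B) :
    Behrend.map B x < B ^ D := by
  simpa using (finFunctionFinEquiv fun i => (⟨x i, hx i⟩ : Fin B)).isLt

lemma exists_meanFree_subset_range_pow {A : ℕ} (hA : A ≠ 0) (d D : ℕ) :
    ∃ S ⊆ range ((A * d) ^ D), MeanFree A (S : Set ℕ) ∧ (d : ℝ) ^ D / (D * d ^ 2) ≤ #S := by
  obtain ⟨k, hk⟩ := Behrend.exists_large_sphere D d
  have hiso := isAddFreimanIso_behrendMap hA D d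
  have hsub : (Behrend.sphere D d k : Set (Fin D → ℕ)) ⊆ Behrend.box D d :=
    Finset.coe_subset.2 Behrend.sphere_subset_box
  refine ⟨(Behrend.sphere D d k).image (Behrend.map (A * d)), ?_, ?_, ?_⟩
  · refine Finset.image_subset_iff.2 fun x hx => mem_range.2 (behrendMap_lt_pow fun i => ?_)
    exact (Behrend.mem_box.1 (hsub hx) i).trans_le (Nat.le_mul_of_pos_left d (by omega))
  · rw [Finset.coe_image]
    exact (meanFree_behrendSphere A D d k).image_isAddFreimanIso
      (hiso.subset hsub (hiso.bijOn.injOn.mono hsub).bijOn_image)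
  · rw [Finset.card_image_of_injOn (hiso.bijOn.injOn.mono hsub)]
    exact_mod_cast hk

section Parameters

open Filter Topology

variable {A : ℕ}

/-- The number `D` of digits in Behrend's construction, the largest with `A ^ D ≤ exp x`. The set
obtained has density at least of order `exp (-4 * x)`. -/
def digitCount (A : ℕ) (x : ℝ) : ℕ := ⌊x / Real.log A⌋₊

/-- The bound `d` on the digits in Behrend's construction, the largest with `d ^ 2 ≤ exp x`. -/
def digitBound (x : ℝ) : ℕ := ⌊Real.exp (x / 2)⌋₊

lemma pow_digitCount_le_exp (hA : 1 < A) {x : ℝ} (hx : 0 ≤ x) :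
    (A : ℝ) ^ digitCount A x ≤ Real.exp x := by
  have hlog : 0 < Real.log A := Real.log_pos (by exact_mod_cast hA)
  have hA0 : (0 : ℝ) < A := by exact_mod_cast (zero_lt_one.trans hA)
  rw [← Real.rpow_natCast, Real.rpow_def_of_pos hA0]
  refine Real.exp_le_exp.2 ?_
  rw [mul_comm, ← le_div_iff₀ hlog]
  exact Nat.floor_le (by positivity)

lemma exp_neg_mul_le_behrend_density (hA : 1 < A) {C x : ℝ} (hx : 0 ≤ x)
    (hCx : C ≤ Real.exp x) (hD : digitCount A x ≠ 0) :
    C * Real.exp (-4 * x) * ((A * digitBound x : ℕ) : ℝ) ^ digitCount A x ≤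
      (digitBound x : ℝ) ^ digitCount A x / (digitCount A x * (digitBound x : ℝ) ^ 2) := by
  have hpow := pow_digitCount_le_exp hA hx
  set D := digitCount A x
  set d := digitBound x
  have hd : (0 : ℝ) < d := by
    exact_mod_cast Nat.floor_pos.2 (Real.one_le_exp (by positivity))
  have hdexp : (d : ℝ) ^ 2 ≤ Real.exp x := by
    calc (d : ℝ) ^ 2 ≤ Real.exp (x / 2) ^ 2 := by
          gcongr; exact Nat.floor_le (Real.exp_pos _).le
      _ = Real.exp x := by rw [← Real.exp_nat_mul]; congr 1; push_cast; ring
  have hDexp : (D : ℝ) ≤ Real.exp x :=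
    le_trans (by exact_mod_cast (Nat.lt_pow_self hA).le) hpow
  have hDpos : (0 : ℝ) < D := by exact_mod_cast Nat.pos_of_ne_zero hD
  rw [le_div_iff₀ (mul_pos hDpos (pow_pos hd 2))]
  calc C * Real.exp (-4 * x) * ((A * d : ℕ) : ℝ) ^ D * (D * (d : ℝ) ^ 2)
      = C * (A : ℝ) ^ D * D * (d : ℝ) ^ 2 * Real.exp (-4 * x) * (d : ℝ) ^ D := by
        push_cast; ring
    _ ≤ Real.exp x * Real.exp x * Real.exp x * Real.exp x * Real.exp (-4 * x) * (d : ℝ) ^ D := by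
        gcongr
    _ = (d : ℝ) ^ D := by
        simp only [← Real.exp_add]
        rw [show x + x + x + x + -4 * x = 0 by ring, Real.exp_zero, one_mul]

lemma exp_sq_le_pow_digitCount (hA : 1 < A) {x : ℝ} (hx : Real.log A ≤ x) :
    Real.exp (x ^ 2 / (4 * Real.log A)) ≤ ((A * digitBound x : ℕ) : ℝ) ^ digitCount A x := by
  have hlog : 0 < Real.log A := Real.log_pos (by exact_mod_cast hA)
  have hx0 : 0 < x := hlog.trans_le hx
  have hD : x / (2 * Real.log A) ≤ digitCount A x := by
    have hone : 1 ≤ x / Real.log A := (one_le_div hlog).2 hx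
    have hone' : (1 : ℝ) ≤ digitCount A x := by exact_mod_cast Nat.floor_pos.2 hone
    have hlt : x / Real.log A < digitCount A x + 1 := Nat.lt_floor_add_one _
    rw [mul_comm, ← div_div, div_le_iff₀ two_pos]
    linarith
  have hd : Real.exp (x / 2) ≤ (A * digitBound x : ℕ) := by
    have hpos : 0 < digitBound x := Nat.floor_pos.2 (Real.one_le_exp (by positivity))
    calc Real.exp (x / 2) ≤ ((digitBound x + 1 : ℕ) : ℝ) := by
          exact_mod_cast (Nat.lt_floor_add_one _).le
      _ ≤ (A * digitBound x : ℕ) := by exact_mod_cast (by nlinarith : _ + 1 ≤ A * digitBound x)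
  calc Real.exp (x ^ 2 / (4 * Real.log A)) = Real.exp (x / (2 * Real.log A) * (x / 2)) := by
        congr 1; field_simp; ring
    _ ≤ Real.exp (digitCount A x * (x / 2)) := by gcongr
    _ = Real.exp (x / 2) ^ digitCount A x := Real.exp_nat_mul _ _
    _ ≤ _ := by gcongr

theorem eventually_exists_dense_meanFree (hA : 1 < A) (C : ℝ) :
    ∃ c : ℝ, 0 < c ∧ ∀ᶠ ε in 𝓝[>] (0 : ℝ), ∃ m, ∃ S ⊆ range m, 0 < m ∧ MeanFree A (S : Set ℕ) ∧
      C * ε * m ≤ #S ∧ (1 : ℝ) / m ≤ ε ^ (c * Real.log (1 / ε)) := by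
  have hlog : 0 < Real.log A := Real.log_pos (by exact_mod_cast hA)
  have htends : Tendsto (fun ε : ℝ => -Real.log ε / 4) (𝓝[>] 0) atTop :=
    (tendsto_neg_atBot_atTop.comp Real.tendsto_log_nhdsGT_zero).atTop_div_const four_pos
  refine ⟨1 / (64 * Real.log A), by positivity, ?_⟩
  filter_upwards [htends.eventually_ge_atTop (Real.log A),
    (Real.tendsto_exp_atTop.comp htends).eventually_ge_atTop C, self_mem_nhdsWithin]
    with ε hlarge hC (hε : 0 < ε)
  set x := -Real.log ε / 4 with hx
  have hexp : Real.exp (-4 * x) = ε := by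
    rw [hx, show -4 * (-Real.log ε / 4) = Real.log ε by ring, Real.exp_log hε]
  obtain ⟨S, hSm, hS, hcard⟩ :=
    exists_meanFree_subset_range_pow (by omega : A ≠ 0) (digitBound x) (digitCount A x)
  have hm := exp_sq_le_pow_digitCount hA hlarge
  refine ⟨_, S, hSm, ?_, hS, ?_, ?_⟩
  · exact_mod_cast (Real.exp_pos _).trans_le hm
  · have hD : digitCount A x ≠ 0 := (Nat.floor_pos.2 ((one_le_div hlog).2 hlarge)).ne'
    refine le_trans ?_ hcard
    have := exp_neg_mul_le_behrend_density hA (hlog.le.trans hlarge) hC hD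
    rwa [hexp, ← Nat.cast_pow] at this
  · rw [one_div, inv_le_comm₀ (by exact_mod_cast (Real.exp_pos _).trans_le hm) (by positivity),
      ← Real.rpow_neg hε.le, Real.rpow_def_of_pos hε]
    refine le_of_eq_of_le ?_ (hm.trans (Nat.cast_pow _ _).ge)
    rw [one_div ε, Real.log_inv, hx]
    congr 1
    field_simp
    ring

end Parameters

/-- Telescoping exhibits `s₀` as the mean of the `s i` with weights `α i.succ - α i.castSucc`. -/
lemma MeanFree.eq_of_closed_chain {A : ℕ} {S : Set ℕ} (hS : MeanFree A S) {n : ℕ}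
    {α p : Fin (n + 1) → ℕ} (hα : StrictMono α) (hαA : α (Fin.last n) ≤ A)
    {s : Fin n → ℕ} (hs : ∀ i, s i ∈ S) {s₀ : ℕ} (hs₀ : s₀ ∈ S)
    (hstep : ∀ i, (p i.succ : ℤ) - p i.castSucc = (α i.succ - α i.castSucc) * s i)
    (hclose : (p (Fin.last n) : ℤ) - p 0 = (α (Fin.last n) - α 0) * s₀) (i : Fin n) :
    s i = s₀ := by
  have htelescope (f : Fin (n + 1) → ℕ) :
      ∑ i : Fin n, ((f i.succ : ℤ) - f i.castSucc) = f (Fin.last n) - f 0 := by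
    have := (Fin.sum_univ_succ fun i => (f i : ℤ)).symm.trans (Fin.sum_univ_castSucc _)
    rw [Finset.sum_sub_distrib]
    linarith
  have hlt (i : Fin n) : α i.castSucc < α i.succ := hα i.castSucc_lt_succ
  have hweight (i : Fin n) :
      ((α i.succ - α i.castSucc : ℕ) : ℤ) = α i.succ - α i.castSucc := Nat.cast_sub (hlt i).le
  have htotal : ∑ i : Fin n, ((α i.succ - α i.castSucc : ℕ) : ℤ) = α (Fin.last n) - α 0 := by
    simp only [hweight, htelescope]
  refine hS.eq_of_sum_nsmul_eq (I := univ) (w := fun i : Fin n => α i.succ - α i.castSucc)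
    (fun i _ => hs i) ?_ hs₀ ?_ (mem_univ i) (Nat.sub_pos_of_lt (hlt i)).ne'
  · zify
    rw [htotal]
    omega
  · simp only [smul_eq_mul]
    zify
    rw [htotal, ← hclose, ← htelescope p]
    exact Finset.sum_congr rfl fun i _ => by rw [hstep, hweight]

/-- The graph whose edges join, for each edge `uv` of `H`, the terms `x + a u * s` and
`x + a v * s` of the progressions with common difference `s ∈ S`, in the parts of `u` and `v`.
It is the analogue for `H` of the Ruzsa–Szemerédi graph. -/
def progressionGraph {W : Type*} (H : SimpleGraph W) (a : W → ℕ) (S : Set ℕ) :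
    SimpleGraph (W × ℕ) where
  Adj u v := H.Adj u.1 v.1 ∧ ∃ x, ∃ s ∈ S, u.2 = x + a u.1 * s ∧ v.2 = x + a v.1 * s
  symm := ⟨fun _ _ ⟨huv, x, s, hs, hu, hv⟩ => ⟨huv.symm, x, s, hs, hv, hu⟩⟩
  loopless := ⟨fun _ h => h.1.ne rfl⟩

namespace progressionGraph

variable {W : Type*} {H : SimpleGraph W} {a : W → ℕ} {S : Set ℕ}

/-- The projection of `progressionGraph H a S` to `H`. -/
def fstHom (H : SimpleGraph W) (a : W → ℕ) (S : Set ℕ) : progressionGraph H a S →g H :=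
  ⟨Prod.fst, And.left⟩

lemma adj_add_mul_iff {s : ℕ} (hs : s ∈ S) (x : ℕ) {u v : W} :
    (progressionGraph H a S).Adj (u, x + a u * s) (v, x + a v * s) ↔ H.Adj u v :=
  ⟨And.left, fun h => ⟨h, x, s, hs, rfl, rfl⟩⟩

lemma exists_sub_eq_mul_of_adj {u v : W × ℕ} (h : (progressionGraph H a S).Adj u v) :
    ∃ s ∈ S, (v.2 : ℤ) - u.2 = (a v.1 - a u.1) * s := by
  obtain ⟨_, x, s, hs, hu, hv⟩ := h
  refine ⟨s, hs, ?_⟩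
  rw [hu, hv]
  push_cast
  ring

lemma exists_sub_eq_mul_of_cycle {A n : ℕ} (hS : MeanFree A S) (haA : ∀ u, a u ≤ A)
    (g : SimpleGraph.cycleGraph (n + 3) →g progressionGraph H a S)
    (hg : StrictMono fun i => a (g i).1) :
    ∃ s : ℕ, ((g 1).2 : ℤ) - (g 0).2 = (a (g 1).1 - a (g 0).1) * s ∧
      ((g (Fin.last _)).2 : ℤ) - (g 0).2 = (a (g (Fin.last _)).1 - a (g 0).1) * s := by
  have hstep (i : Fin (n + 2)) : (progressionGraph H a S).Adj (g i.castSucc) (g i.succ) :=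
    g.map_adj (SimpleGraph.pathGraph_le_cycleGraph
      (SimpleGraph.pathGraph_adj.2 (Or.inl (by simp))))
  have hclose : (progressionGraph H a S).Adj (g 0) (g (Fin.last _)) :=
    g.map_adj (SimpleGraph.cycleGraph_adj.2 (Or.inl (by simp)))
  choose s hs hs_eq using fun i => exists_sub_eq_mul_of_adj (hstep i)
  obtain ⟨s₀, hs₀, hs₀_eq⟩ := exists_sub_eq_mul_of_adj hclose
  have hfirst : s 0 = s₀ :=
    hS.eq_of_closed_chain (p := fun i => (g i).2) hg (haA _) hs hs₀ hs_eq hs₀_eq 0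
  exact ⟨s₀, hfirst ▸ hs_eq 0, hs₀_eq⟩

lemma hom_cycleGraph_last_eq {A n : ℕ} (hS : MeanFree A S) (haA : ∀ u, a u ≤ A)
    {g g' : SimpleGraph.cycleGraph (n + 3) →g progressionGraph H a S}
    (hg : StrictMono fun i => a (g i).1) (hg' : StrictMono fun i => a (g' i).1)
    (h0 : g 0 = g' 0) (h1 : g 1 = g' 1) (hlast : (g (Fin.last _)).1 = (g' (Fin.last _)).1) :
    g (Fin.last _) = g' (Fin.last _) := by
  obtain ⟨s, hs1, hs2⟩ := exists_sub_eq_mul_of_cycle hS haA g hg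
  obtain ⟨s', hs'1, hs'2⟩ := exists_sub_eq_mul_of_cycle hS haA g' hg'
  rw [← h0, ← h1] at hs'1
  rw [← h0, ← hlast] at hs'2
  have ha01 : (a (g 1).1 : ℤ) - a (g 0).1 ≠ 0 :=
    sub_ne_zero.2 (by exact_mod_cast (hg Fin.zero_lt_one).ne')
  have hss' : (s : ℤ) = s' := mul_left_cancel₀ ha01 (hs1.symm.trans hs'1)
  refine Prod.ext hlast ?_
  rw [hss'] at hs2
  have := hs2.trans hs'2.symm
  omega

end progressionGraph

section Core

open SimpleGraph

variable {U V : Type*} {G : SimpleGraph U} {K : SimpleGraph V}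

lemma exists_iso_eq_of_surjective [Finite V] (σ : K →g K) (hσ : Function.Surjective σ) :
    ∃ e : K ≃g K, ⇑e = σ := by
  have hinj : Function.Injective σ := Finite.injective_iff_surjective.2 hσ
  have hedge : Function.Surjective σ.mapEdgeSet :=
    Finite.surjective_of_injective (Hom.mapEdgeSet.injective σ hinj)
  refine ⟨⟨Equiv.ofBijective σ ⟨hinj, hσ⟩, fun {u v} => ⟨fun huv => ?_, σ.map_adj⟩⟩, rfl⟩
  obtain ⟨⟨e, he⟩, heq⟩ := hedge ⟨s(σ u, σ v), huv⟩
  have : Sym2.map σ e = Sym2.map σ s(u, v) := congrArg Subtype.val heq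
  have huv' : s(u, v) ∈ K.edgeSet := Sym2.map.injective hinj this ▸ he
  exact huv'

lemma exists_section_map_top_eq [Finite V] (hK : ∀ σ : K →g K, Function.Surjective σ)
    (ψ : G →g K) {K' : G.Subgraph} (e : K ≃g K'.coe) :
    ∃ f : K →g G, ψ.comp f = Hom.id ∧ (⊤ : K.Subgraph).map f = K' := by
  let f₀ : K →g G := K'.hom.comp e.toHom
  obtain ⟨τ, hτ⟩ := exists_iso_eq_of_surjective (ψ.comp f₀) (hK _)
  refine ⟨f₀.comp τ.symm.toHom, ?_, ?_⟩
  · ext v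
    exact (congrFun hτ (τ.symm v)).symm.trans (τ.apply_symm_apply v)
  · simp only [f₀, Subgraph.map_comp, Subgraph.map_iso_top, Subgraph.map_hom_top]

lemma ncard_copies_le_ncard_sections [Finite U] [Finite V]
    (hK : ∀ σ : K →g K, Function.Surjective σ) (ψ : G →g K) :
    {K' : G.Subgraph | Nonempty (K ≃g K'.coe)}.ncard ≤
      {f : K →g G | ψ.comp f = Hom.id}.ncard := by
  refine (Set.ncard_le_ncard ?_ (Set.toFinite _)).trans
    (Set.ncard_image_le (f := fun f : K →g G => (⊤ : K.Subgraph).map f) (Set.toFinite _))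
  rintro K' ⟨e⟩
  exact exists_section_map_top_eq hK ψ e

end Core

section Sections

open SimpleGraph

variable {U V W : Type*} {G : SimpleGraph U} {K : SimpleGraph V} {H : SimpleGraph W}
  {a : W → ℕ} {S : Set ℕ} {A n : ℕ} {φ : H →g K} {π : G →g progressionGraph H a S}
  {c : Copy (cycleGraph (n + 3)) K}

lemma section_apply_last_eq (hS : MeanFree A S) (haA : ∀ u, a u ≤ A)
    (ha : ∀ σ : V → W, (∀ v, φ (σ v) = v) → StrictMono fun i => a (σ (c i))) {f f' : K →g G}
    (hf : ∀ v, φ (π (f v)).1 = v) (hf' : ∀ v, φ (π (f' v)).1 = v)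
    (hff' : ∀ v ≠ c (Fin.last _), f v = f' v)
    (hpart : (π (f (c (Fin.last _)))).1 = (π (f' (c (Fin.last _)))).1) :
    π (f (c (Fin.last _))) = π (f' (c (Fin.last _))) := by
  have heq {i : Fin (n + 3)} (hi : i ≠ Fin.last _) : π (f (c i)) = π (f' (c i)) :=
    congrArg π (hff' _ (c.injective.ne hi))
  exact progressionGraph.hom_cycleGraph_last_eq hS haA (g := (π.comp f).comp c.toHom)
    (g' := (π.comp f').comp c.toHom) (ha _ hf) (ha _ hf') (heq (Fin.last_pos).ne)
    (heq (by simp [Fin.ext_iff])) hpart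

lemma ncard_sections_le [Fintype U] [Fintype V] [Fintype W] [DecidableEq W] (hS : MeanFree A S)
    (haA : ∀ u, a u ≤ A)
    (ha : ∀ σ : V → W, (∀ v, φ (σ v) = v) → StrictMono fun i => a (σ (c i))) {B : ℕ}
    (hB : ∀ w, #{u | π u = w} ≤ B) :
    {f : K →g G | (φ.comp ((progressionGraph.fstHom H a S).comp π)).comp f = Hom.id}.ncard ≤
      B * (Fintype.card U ^ (Fintype.card V - 1) * Fintype.card W) := by
  set T := (Set.toFinite
    {f : K →g G | (φ.comp ((progressionGraph.fstHom H a S).comp π)).comp f = Hom.id}).toFinset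
  have hT {f : K →g G} (hf : f ∈ T) (v : V) : φ (π (f v)).1 = v :=
    have hid : f ∈ {f : K →g G | _} := (Set.Finite.mem_toFinset _).1 hf
    DFunLike.congr_fun hid v
  let z := c (Fin.last _)
  let data (f : K →g G) : ({v // v ≠ z} → U) × W := (fun v => f v, (π (f z)).1)
  have hfibre : ∀ d ∈ T.image data, #{f ∈ T | data f = d} ≤ B := by
    intro d hd
    obtain ⟨f₀, hf₀, rfl⟩ := Finset.mem_image.1 hd
    have hoff {f : K →g G} (hf : data f = data f₀) (v : V) (hv : v ≠ z) : f v = f₀ v :=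
      congrFun (congrArg Prod.fst hf) ⟨v, hv⟩
    refine (Finset.card_le_card_of_injOn (fun f => f z) ?_ ?_).trans (hB (π (f₀ z)))
    · intro f hf
      obtain ⟨hfT, hfd⟩ := Finset.mem_filter.1 hf
      exact mem_filter_univ _ |>.2 (section_apply_last_eq hS haA ha (hT hfT) (hT hf₀) (hoff hfd)
        (congrArg Prod.snd hfd))
    · intro f hf f' hf' (hz : f z = f' z)
      ext v
      by_cases hv : v = z
      · rw [hv, hz]
      · rw [hoff (Finset.mem_filter.1 hf).2 v hv, hoff (Finset.mem_filter.1 hf').2 v hv]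
  rw [Set.ncard_eq_toFinset_card _]
  calc #T ≤ B * #(T.image data) := Finset.card_le_mul_card_image T B hfibre
    _ ≤ B * Fintype.card (({v // v ≠ z} → U) × W) := by gcongr; exact Finset.card_le_univ _
    _ = _ := by simp [Fintype.card_subtype_compl]

end Sections

section BlowUp

/-- The map along which `progressionGraph` is blown up to `n` vertices: the residue modulo `h` is
the part, and the quotient is reduced modulo `M` to the position in it. -/
def blowupCoord (h M n : ℕ) [NeZero h] (i : Fin n) : Fin h × ℕ :=
  (Fin.ofNat h i, i / h % M)

lemma card_blowupCoord_fiber_le (h M n : ℕ) [NeZero h] (w : Fin h × ℕ) :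
    #{i | blowupCoord h M n i = w} ≤ n / h / M + 1 := by
  rw [← Finset.card_range (n / h / M + 1)]
  refine Finset.card_le_card_of_injOn (fun i => (i / h / M : ℕ)) (fun i _ => ?_) ?_
  · exact Finset.mem_coe.2 (mem_range.2
      (Nat.lt_succ_of_le (Nat.div_le_div_right (Nat.div_le_div_right i.2.le))))
  · intro i hi j hj (hij : (i / h / M : ℕ) = j / h / M)
    have hcoord : blowupCoord h M n i = blowupCoord h M n j :=
      ((mem_filter_univ _).1 hi).trans ((mem_filter_univ _).1 hj).symm
    obtain ⟨hmod, hpos⟩ := Prod.mk.inj hcoord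
    have hdiv : (i / h : ℕ) = j / h := by
      rw [← Nat.mod_add_div (i / h) M, ← Nat.mod_add_div (j / h) M, hpos, hij]
    have hmod : (i % h : ℕ) = j % h := congrArg Fin.val hmod
    exact Fin.ext (by rw [← Nat.mod_add_div i h, ← Nat.mod_add_div j h, hmod, hdiv])

lemma blowupCoord_add_mul {h M n : ℕ} [NeZero h] (u : Fin h) (y : ℕ) (hy : u + h * y < n) :
    blowupCoord h M n ⟨u + h * y, hy⟩ = (u, y % M) := by
  refine Prod.ext (Fin.ext ?_) ?_
  · simp [blowupCoord, Nat.mod_eq_of_lt u.isLt]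
  · simp [blowupCoord, Nat.add_mul_div_left _ _ (NeZero.pos h), Nat.div_eq_of_lt u.isLt]

/-- The blow-up of `progressionGraph H a S`, with positions restricted to `range M`, to `n` vertices
in nearly equal classes. -/
def blowupGraph {h : ℕ} [NeZero h] (H : SimpleGraph (Fin h)) (a : Fin h → ℕ) (S : Set ℕ)
    (M n : ℕ) : SimpleGraph (Fin n) :=
  (progressionGraph H a S).comap (blowupCoord h M n)

/-- The blow-down of `blowupGraph H a S M n`. -/
def blowupGraph.homProgression {h : ℕ} [NeZero h] (H : SimpleGraph (Fin h)) (a : Fin h → ℕ)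
    (S : Set ℕ) (M n : ℕ) : blowupGraph H a S M n →g progressionGraph H a S :=
  SimpleGraph.Hom.comap _ _

/-- The natural numbers below `M * b` whose residue modulo `M` lies in `S`. -/
def residueLifts (M b : ℕ) (S : Finset ℕ) : Finset ℕ := {x ∈ range (M * b) | x % M ∈ S}

lemma card_mul_le_card_residueLifts {M : ℕ} {S : Finset ℕ} (hS : S ⊆ range M) (b : ℕ) :
    #S * b ≤ #(residueLifts M b S) := by
  have hlt {s : ℕ} (hs : s ∈ S) : s < M := mem_range.1 (hS hs)
  rw [← Finset.card_range b, ← Finset.card_product, Finset.card_range]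
  refine Finset.card_le_card_of_injOn (fun p => p.1 + M * p.2) ?_ ?_
  · rintro ⟨s, j⟩ hsj
    obtain ⟨hs, hj⟩ := Finset.mem_product.1 hsj
    refine Finset.mem_coe.2 (Finset.mem_filter.2 ⟨mem_range.2 ?_, ?_⟩)
    · calc s + M * j < M + M * j := Nat.add_lt_add_right (hlt hs) _
        _ = M * (j + 1) := by ring
        _ ≤ M * b := Nat.mul_le_mul_left M (mem_range.1 hj)
    · simpa [Nat.mod_eq_of_lt (hlt hs)] using hs
  · rintro ⟨s, j⟩ hsj ⟨t, k⟩ htk (heq : s + M * j = t + M * k)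
    have hs := hlt (Finset.mem_product.1 hsj).1
    have ht := hlt (Finset.mem_product.1 htk).1
    have hst : s = t := by
      simpa [Nat.mod_eq_of_lt hs, Nat.mod_eq_of_lt ht] using congrArg (· % M) heq
    subst hst
    exact Prod.ext rfl (Nat.eq_of_mul_eq_mul_left (by omega) (Nat.add_left_cancel heq))

end BlowUp

section Embeddings

variable {h : ℕ} [NeZero h] {H : SimpleGraph (Fin h)} {a : Fin h → ℕ} {S : Finset ℕ}
  {A m b n : ℕ}

lemma exists_embedding_blowupGraph (haA : ∀ u, a u ≤ A)
    (hSm : S ⊆ range m) (hn : h * ((1 + A) * ((1 + A) * m * b)) ≤ n) {x z : ℕ}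
    (hx : x ∈ residueLifts ((1 + A) * m) b (range m)) (hz : z ∈ residueLifts ((1 + A) * m) b S) :
    ∃ f : H ↪g blowupGraph H a S ((1 + A) * m) n, ∀ u, (f u : ℕ) = u + h * (x + a u * z) := by
  set M := (1 + A) * m
  obtain ⟨hxlt, hxm⟩ := Finset.mem_filter.1 hx
  obtain ⟨hzlt, hzS⟩ := Finset.mem_filter.1 hz
  rw [mem_range] at hxlt hxm hzlt
  have hpos (u : Fin h) : u + h * (x + a u * z) < n := by
    have hstep : x + a u * z + 1 ≤ (1 + A) * (M * b) := by
      have := Nat.mul_le_mul (haA u) hzlt.le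
      linarith
    calc u + h * (x + a u * z) < h * (x + a u * z + 1) := by linarith [u.isLt]
      _ ≤ n := (Nat.mul_le_mul_left h hstep).trans hn
  have hcoord (u : Fin h) : blowupCoord h M n ⟨_, hpos u⟩ = (u, x % M + a u * (z % M)) := by
    have hlt : x % M + a u * (z % M) < M := by
      have := Nat.mul_le_mul (haA u) (mem_range.1 (hSm hzS)).le
      linarith [show M = m + A * m by ring]
    rw [blowupCoord_add_mul, ← Nat.mod_eq_of_lt hlt]
    simp [Nat.add_mod, Nat.mul_mod]
  have hinj : Function.Injective fun u => (⟨_, hpos u⟩ : Fin n) := fun u v huv =>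
    congrArg Prod.fst ((hcoord u).symm.trans ((congrArg _ huv).trans (hcoord v)))
  have hadj (u v : Fin h) :
      (blowupGraph H a S M n).Adj ⟨_, hpos u⟩ ⟨_, hpos v⟩ ↔ H.Adj u v := by
    rw [blowupGraph, SimpleGraph.comap_adj, hcoord, hcoord]
    exact progressionGraph.adj_add_mul_iff (Finset.mem_coe.2 hzS) _
  exact ⟨⟨⟨_, hinj⟩, hadj _ _⟩, fun _ => rfl⟩

lemma eq_of_progressions_meet_twice (ha : Function.Injective a) {x z x' z' : ℕ}
    {u v u' v' : Fin h} (huv : u ≠ v)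
    (hu : u + h * (x + a u * z) = u' + h * (x' + a u' * z'))
    (hv : v + h * (x + a v * z) = v' + h * (x' + a v' * z')) : x = x' ∧ z = z' := by
  have hpart {w w' : Fin h} {y y' : ℕ} (hw : w + h * y = w' + h * y') : w = w' ∧ y = y' := by
    have hmod : w = w' := Fin.ext <| by
      simpa [Nat.mod_eq_of_lt w.isLt, Nat.mod_eq_of_lt w'.isLt] using congrArg (· % h) hw
    subst hmod
    exact ⟨rfl, Nat.eq_of_mul_eq_mul_left (NeZero.pos h) (Nat.add_left_cancel hw)⟩
  obtain ⟨rfl, hu⟩ := hpart hu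
  obtain ⟨rfl, hv⟩ := hpart hv
  have hz : z = z' := by
    have hne : (a u : ℤ) - a v ≠ 0 := sub_ne_zero.2 (by exact_mod_cast ha.ne huv)
    zify at hu hv ⊢
    exact mul_left_cancel₀ hne (by linarith)
  subst hz
  exact ⟨Nat.add_right_cancel hu, rfl⟩

end Embeddings

section Distance

lemma card_le_editDist {ι W : Type*} [Fintype ι] {H : SimpleGraph W} {n : ℕ}
    {G G' : SimpleGraph (Fin n)} (E : ι → H ↪g G)
    (hE : Pairwise fun i j => (Set.range (E i) ∩ Set.range (E j)).Subsingleton)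
    (hG' : IsEmpty (H ↪g G')) : Fintype.card ι ≤ editDist G G' := by
  have hdiff (i : ι) : ∃ u v, ¬ (G.Adj (E i u) (E i v) ↔ G'.Adj (E i u) (E i v)) := by
    by_contra! hsame
    exact hG'.false ⟨(E i).toEmbedding, fun {u v} => (hsame u v).symm.trans (E i).map_adj_iff⟩
  choose u v huv using hdiff
  have hne (i : ι) : E i (u i) ≠ E i (v i) := fun heq => huv i (by simp [heq])
  have hinj : Function.Injective fun i => s(E i (u i), E i (v i)) := by
    intro i j (hij : s(E i (u i), E i (v i)) = s(E j (u j), E j (v j)))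
    by_contra hij'
    have hmem {x : Fin n} (hx : x ∈ s(E j (u j), E j (v j))) : x ∈ Set.range (E j) := by
      rcases Sym2.mem_iff.1 hx with rfl | rfl <;> exact Set.mem_range_self _
    exact hne i (hE hij' ⟨⟨_, rfl⟩, hmem (hij ▸ Sym2.mem_mk_left _ _)⟩
      ⟨⟨_, rfl⟩, hmem (hij ▸ Sym2.mem_mk_right _ _)⟩)
  rw [← Nat.card_eq_fintype_card, ← Set.ncard_univ, ← Set.ncard_image_of_injective _ hinj]
  refine Set.ncard_le_ncard ?_ (Set.toFinite _)
  rintro _ ⟨i, -, rfl⟩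
  have := huv i
  simp only [Set.mem_ofPred_eq, SimpleGraph.mem_edgeSet]
  tauto

variable {h : ℕ} [NeZero h] {H : SimpleGraph (Fin h)} {a : Fin h → ℕ} {S : Finset ℕ} {A m : ℕ}

lemma mul_card_mul_sq_le_editDist_blowupGraph (ha : Function.Injective a) (haA : ∀ u, a u ≤ A)
    (hSm : S ⊆ range m) {b n : ℕ} (hn : h * ((1 + A) * ((1 + A) * m * b)) ≤ n)
    {G' : SimpleGraph (Fin n)} (hG' : IsEmpty (H ↪g G')) :
    m * #S * b ^ 2 ≤ editDist (blowupGraph H a S ((1 + A) * m) n) G' := by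
  set M := (1 + A) * m
  have hmM : range m ⊆ range M :=
    range_subset_range.2 (Nat.le_mul_of_pos_left m (by omega))
  let I := residueLifts M b (range m) ×ˢ residueLifts M b S
  choose E hE using fun i : I => exists_embedding_blowupGraph (H := H) haA hSm hn
    (Finset.mem_product.1 i.2).1 (Finset.mem_product.1 i.2).2
  have hcard : m * #S * b ^ 2 ≤ Fintype.card I := by
    calc m * #S * b ^ 2 = #(range m) * b * (#S * b) := by rw [card_range]; ring
      _ ≤ #(residueLifts M b (range m)) * #(residueLifts M b S) := by
        gcongr
        exacts [card_mul_le_card_residueLifts hmM b,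
          card_mul_le_card_residueLifts (hSm.trans hmM) b]
      _ = Fintype.card I := by rw [Fintype.card_coe, Finset.card_product]
  refine hcard.trans (card_le_editDist E (fun i j hij => ?_) hG')
  rintro _ ⟨⟨u, rfl⟩, ⟨u', hu⟩⟩ _ ⟨⟨v, rfl⟩, ⟨v', hv⟩⟩
  by_contra hne
  have hu := congrArg Fin.val hu
  have hv := congrArg Fin.val hv
  rw [hE, hE] at hu hv
  obtain ⟨hx, hz⟩ := eq_of_progressions_meet_twice ha (ne_of_apply_ne _ hne) hu.symm hv.symm
  exact hij (Subtype.ext (Prod.ext hx hz))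

lemma far_inducedFree_blowupGraph (ha : Function.Injective a) (haA : ∀ u, a u ≤ A)
    (hm : 0 < m) (hSm : S ⊆ range m) {ε : ℝ} (hε : 0 ≤ ε)
    (hcard : (4 * h ^ 2 * (1 + A) ^ 4 : ℕ) * ε * m ≤ #S) {n : ℕ}
    (hn : h * ((1 + A) * ((1 + A) * m)) ≤ n) :
    Far (InducedFree {⟨h, H⟩}) (blowupGraph H a S ((1 + A) * m) n) ε := by
  intro G' hG'
  set N := h * ((1 + A) * ((1 + A) * m)) with hN
  have hNpos : 0 < N := by have := NeZero.pos h; positivity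
  set b := n / N
  have hb : 1 ≤ b := (Nat.one_le_div_iff hNpos).2 hn
  have hbn : h * ((1 + A) * ((1 + A) * m * b)) ≤ n := by
    calc _ = N * b := by rw [hN]; ring
      _ ≤ n := Nat.mul_div_le n N
  have hnb : n ≤ 2 * (N * b) := by
    have : n < N * (b + 1) := Nat.lt_mul_div_succ n hNpos
    nlinarith
  calc ε * (n : ℝ) ^ 2 ≤ ε * ((2 * (N * b) : ℕ) : ℝ) ^ 2 := by gcongr
    _ = m * ((4 * h ^ 2 * (1 + A) ^ 4 : ℕ) * ε * m) * b ^ 2 := by rw [hN]; push_cast; ring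
    _ ≤ m * #S * b ^ 2 := by gcongr
    _ ≤ editDist (blowupGraph H a S ((1 + A) * m) n) G' := by
      exact_mod_cast mul_card_mul_sq_le_editDist_blowupGraph ha haA hSm hbn (hG' _ rfl)

end Distance

lemma exists_strictMono_labelling {V : Type*} {h r : ℕ} [NeZero r] (φ : Fin h → V) {c : Fin r → V}
    (hc : Function.Injective c) :
    ∃ a : Fin h → ℕ, Function.Injective a ∧ (∀ u, a u < r * h) ∧
      ∀ σ : V → Fin h, (∀ v, φ (σ v) = v) → StrictMono fun i => a (σ (c i)) := by
  let label (u : Fin h) : Fin (r * h) := finProdFinEquiv (Function.invFun c (φ u), u)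
  refine ⟨fun u => label u, fun u v huv => ?_, fun u => (label u).isLt, fun σ hσ i j hij => ?_⟩
  · exact congrArg Prod.snd (finProdFinEquiv.injective (Fin.ext huv))
  · have hlabel (i : Fin r) : (label (σ (c i)) : ℕ) = σ (c i) + h * i := by
      simp [label, hσ, Function.leftInverse_invFun hc i]
    have hsucc : (i : ℕ) + 1 ≤ j := hij
    simp only [hlabel]
    calc (σ (c i) : ℕ) + h * i < h * (i + 1) := by linarith [(σ (c i)).isLt]
      _ ≤ h * j := Nat.mul_le_mul_left h hsucc
      _ ≤ σ (c j) + h * j := Nat.le_add_left _ _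

section Bipartite

open SimpleGraph

variable {V W : Type*}

lemma IsCoreOf.surjective [Finite V] {G : SimpleGraph V} {X : Set V} (hX : IsCoreOf G X)
    (σ : G.induce X →g G.induce X) : Function.Surjective σ := by
  obtain ⟨⟨φ⟩, hmin⟩ := hX
  let Y : Set V := Set.range fun x => (σ x : V)
  have hYX : Y ⊆ X := Set.range_subset_iff.2 fun x => (σ x).2
  let φY : G →g G.induce Y := ⟨fun u => ⟨σ (φ u), φ u, rfl⟩, fun huv => σ.map_adj (φ.map_adj huv)⟩
  have hY : Y = X := Set.eq_of_subset_of_ncard_le hYX (hmin Y ⟨φY⟩) (Set.toFinite X)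
  intro x
  obtain ⟨y, hy⟩ : (x : V) ∈ Y := hY.symm.subset x.2
  exact ⟨y, Subtype.ext hy⟩

lemma isBipGraph_of_isBipartite {H : SimpleGraph W} (hH : H.IsBipartite) :
    IsBipGraph H := by
  obtain ⟨col⟩ := hH
  refine ⟨{u | col u = 0}, fun u hu v hv huv => col.valid huv (hu.trans hv.symm),
    fun u hu v hv huv => col.valid huv ?_⟩
  exact (Fin.eq_one_of_ne_zero _ hu).trans (Fin.eq_one_of_ne_zero _ hv).symm

lemma exists_cycleGraph_copy_of_not_isBipartite {K : SimpleGraph V} (hK : ¬ K.IsBipartite) :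
    ∃ n, Nonempty (Copy (cycleGraph (n + 3)) K) := by
  by_contra! hfree
  refine hK (IsAcyclic.isBipartite (isAcyclic_iff_free_cycleGraph.2 fun n hn => ?_))
  obtain ⟨k, rfl⟩ := Nat.exists_eq_add_of_le' hn
  exact fun hcopy => (hfree k).false hcopy.some

end Bipartite

lemma ncard_copies_blowupGraph_le {V : Type*} [Finite V] {K : SimpleGraph V} {h : ℕ} [NeZero h]
    {H : SimpleGraph (Fin h)} {a : Fin h → ℕ} {S : Set ℕ} {A m n r : ℕ} {φ : H →g K}
    {c : SimpleGraph.Copy (SimpleGraph.cycleGraph (r + 3)) K}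
    (hK : ∀ σ : K →g K, Function.Surjective σ) (hS : MeanFree A S) (hA : 1 ≤ A)
    (haA : ∀ u, a u ≤ A)
    (ha : ∀ σ : V → Fin h, (∀ v, φ (σ v) = v) → StrictMono fun i => a (σ (c i)))
    (hm : 0 < m) (hn : h * ((1 + A) * ((1 + A) * m)) ≤ n) :
    ({K' : (blowupGraph H a S ((1 + A) * m) n).Subgraph | Nonempty (K ≃g K'.coe)}.ncard : ℝ) ≤
      1 / m * (n : ℝ) ^ Nat.card V := by
  cases nonempty_fintype V
  set M := (1 + A) * m
  have hclass : (n / h / M + 1) * h * m ≤ n := by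
    have hhM : 2 * (h * m) ≤ h * M := by
      rw [mul_left_comm]
      exact Nat.mul_le_mul_left h (Nat.mul_le_mul_right m (by omega))
    have hMn : h * M ≤ n :=
      (Nat.mul_le_mul_left h (Nat.le_mul_of_pos_left M (by omega))).trans hn
    have hquot : h * M * (n / h / M) ≤ n := by
      rw [Nat.div_div_eq_div_mul]
      exact Nat.mul_div_le _ _
    nlinarith [Nat.mul_le_mul_right (n / h / M + 1) hhM]
  have hk : Fintype.card V ≠ 0 := (Fintype.card_pos_iff.2 ⟨c 0⟩).ne'
  rw [one_div_mul_eq_div, le_div_iff₀ (by exact_mod_cast hm), Nat.card_eq_fintype_card]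
  norm_cast
  calc _ ≤ (n / h / M + 1) * (n ^ (Fintype.card V - 1) * h) * m := by
        gcongr
        simpa using (ncard_copies_le_ncard_sections hK _).trans
          (ncard_sections_le (π := blowupGraph.homProgression H a S M n) hS haA ha
            (card_blowupCoord_fiber_le h M n))
    _ = n ^ (Fintype.card V - 1) * ((n / h / M + 1) * h * m) := by ring
    _ ≤ n ^ (Fintype.card V - 1) * n := Nat.mul_le_mul_left _ hclass
    _ = n ^ Fintype.card V := pow_sub_one_mul hk n

/-- Theorem 3.6 of the paper. For every `h ≥ 3` there are `ε₀, c > 0` such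
that for every `ε ∈ (0, ε₀)` and every non-bipartite graph `H` on `h` vertices with core
`K = H[X]` on `k = |X|` vertices, for all sufficiently large `n` there is an `n`-vertex graph
`G` that is homomorphic to `K`, is `ε`-far from being induced `H`-free, and contains at most
`ε ^ (c log(1/ε)) n ^ k` (not necessarily induced) copies of `K`. -/
theorem hard_construction_via_core (h : ℕ) (hh : 3 ≤ h) :
    ∃ ε₀ c : ℝ, 0 < ε₀ ∧ 0 < c ∧
      ∀ ε : ℝ, 0 < ε → ε < ε₀ →
      ∀ H : SimpleGraph (Fin h), ¬ IsBipGraph H →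
      ∀ X : Set (Fin h), IsCoreOf H X →
        ∃ n₀ : ℕ, ∀ n : ℕ, n₀ ≤ n → ∃ G : SimpleGraph (Fin n),
          Nonempty (G →g H.induce X) ∧
          Far (InducedFree {⟨h, H⟩}) G ε ∧
          (Set.ncard {K : G.Subgraph | Nonempty (H.induce X ≃g K.coe)} : ℝ)
            ≤ ε ^ (c * Real.log (1 / ε)) * (n : ℝ) ^ X.ncard := by
  have : NeZero h := ⟨by omega⟩
  have hA : 1 < h * h := by nlinarith
  obtain ⟨c, hc, hdense⟩ :=
    eventually_exists_dense_meanFree hA (4 * h ^ 2 * (1 + h * h) ^ 4 : ℕ)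
  obtain ⟨ε₀, hε₀, hdense⟩ := mem_nhdsGT_iff_exists_Ioo_subset.1 hdense
  refine ⟨ε₀, c, hε₀, hc, fun ε hε hεlt H hH X hX => ?_⟩
  obtain ⟨m, S, hSm, hm, hS, hcard, hmε⟩ := hdense ⟨hε, hεlt⟩
  obtain ⟨φ⟩ := hX.1
  obtain ⟨r, ⟨z⟩⟩ := exists_cycleGraph_copy_of_not_isBipartite
    fun hbip => hH (isBipGraph_of_isBipartite (hbip.of_hom φ))
  have hr : r + 3 ≤ h := by
    simpa using Fintype.card_le_of_injective _ (Subtype.val_injective.comp z.injective)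
  obtain ⟨a, ha, halt, hmono⟩ := exists_strictMono_labelling φ z.injective
  have haA (u : Fin h) : a u ≤ h * h := (halt u).le.trans (Nat.mul_le_mul_right h hr)
  refine ⟨h * ((1 + h * h) * ((1 + h * h) * m)), fun n hn =>
    ⟨blowupGraph H a S ((1 + h * h) * m) n,
      ⟨φ.comp ((progressionGraph.fstHom H a S).comp (blowupGraph.homProgression H a S _ n))⟩,
      far_inducedFree_blowupGraph ha haA hm hSm hε.le hcard hn, ?_⟩⟩
  exact (ncard_copies_blowupGraph_le hX.surjective hS hA.le haA hmono hm hn).trans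
    (mul_le_mul_of_nonneg_right hmε (by positivity))

end
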